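/- Fix an integer m ≥ 0. Then for every continuous function a : [0, π] → ℝ, lim_{l→∞} ((2l+1)/2) · ((l−m)!/(l+m)!) · ∫_0^π a(θ) · sin θ · P_{l,m}(cos θ)² dθ = (1/π) ∫_0^π a(θ) dθ, where the limit is over integers l ≥ m. -/

import Mathlib

/-!
Put `q_l = P_l^{(m)}`, the `m`-th derivative of the Legendre polynomial. The substitution `x = cos θ`
turns the left-hand side into `∫ a(arccos x) dν_l`, where `ν_l` is the probability measure on
`[-1, 1]` with density `c_l (1 - x²)^m q_l(x)²` and `c_l = (2l+1)/2 · (l-m)!/(l+m)!`.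
The claim is that `ν_l` converges weakly to the arcsine law, the image of `dθ/π` under `cos`.

The method of moments applies because the `q_l` are orthogonal for the weight `(1 - x²)^m`
(`intPoly_legW_ne`, `legConst_mul_self`) and satisfy the three-term recurrence
`(2l+1) x q_l = (l+1-m) q_{l+1} + (l+m) q_{l-1}` (`legD_rec`), whose coefficients divided by
`2l+1` tend to `1/2`. Hence the limits `μ(k, d)` of `c_l ∫ x^k (1 - x²)^m q_l q_{l+d}`, for `d ∈ ℤ`,
satisfy `μ(k+1, d) = (μ(k, d+1) + μ(k, d-1)) / 2` and `μ(0, d) = δ_{d,0}`. The numbers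
`(1/π) ∫_0^π cos^k θ cos(dθ) dθ` obey the same recursion, by the product formula for cosines
(`tendsto_moment`). The case `d = 0` gives the claim for polynomials in `cos θ`, and the
Weierstrass approximation theorem, together with the total mass `1` of `ν_l`, extends it to
continuous `a`.

The recurrence and the differential equation of the `q_l` are derived from the Rodrigues formula;
orthogonality and the norms follow from them by integration by parts in polynomial form.
-/

open Filter Real

/-- The associated Legendre function
`P_{l,m}(x) = ((−1)^m / (2^l l!)) (1 − x²)^{m/2} D^{l+m}[(x² − 1)^l](x)`. -/
noncomputable def assocLegendre (l m : ℕ) (x : ℝ) : ℝ :=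
  ((-1 : ℝ) ^ m / (2 ^ l * (Nat.factorial l : ℝ))) * (1 - x ^ 2) ^ ((m : ℝ) / 2) *
    iteratedDeriv (l + m) (fun y : ℝ => (y ^ 2 - 1) ^ l) x

open Polynomial

/-! ### Legendre polynomials and their recurrences -/

/-- The Legendre polynomial `P_n`, given by the Rodrigues formula. -/
noncomputable def legendrePoly (n : ℕ) : ℝ[X] :=
  C (1 / (2 ^ n * (n.factorial : ℝ))) * derivative^[n] ((X ^ 2 - 1) ^ n)

/-- The antiderivative `D^n (X² - 1)^(n+1) / (2^(n+1) (n+1)!)` of `P_{n+1}`. -/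
noncomputable def legendrePrim (n : ℕ) : ℝ[X] :=
  C (1 / (2 ^ (n + 1) * ((n + 1).factorial : ℝ))) * derivative^[n] ((X ^ 2 - 1) ^ (n + 1))

lemma norm_const_succ (n : ℕ) :
    (C (1 / (2 ^ (n + 1) * ((n + 1).factorial : ℝ))) : ℝ[X]) * (2 * ((n : ℝ[X]) + 1)) =
      C (1 / (2 ^ n * (n.factorial : ℝ))) := by
  have h : (2 * ((n : ℝ[X]) + 1)) = C (2 * ((n : ℝ) + 1)) := by
    simp only [C_mul, C_add, C_1, C_ofNat, map_natCast]
  rw [h, ← C_mul]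
  congr 1
  have := Nat.factorial_pos n
  push_cast [Nat.factorial_succ]
  field_simp
  ring

lemma derivative_legendrePrim (n : ℕ) :
    derivative (legendrePrim n) = legendrePoly (n + 1) := by
  simp only [legendrePrim, legendrePoly, derivative_C_mul, Function.iterate_succ_apply']

/-- Integrated form of `P_{n+2}' - P_n' = (2n+3) P_{n+1}`; it comes from computing
`D² (X² - 1)^(n+2)` before applying the remaining `n` derivatives. -/
lemma legendrePoly_eq_prim (n : ℕ) :
    legendrePoly (n + 2) = (2 * (n : ℝ[X]) + 3) * legendrePrim n + legendrePoly n := by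
  have h2 : derivative^[n + 2] (((X : ℝ[X]) ^ 2 - 1) ^ (n + 2)) =
      (2 * ((n : ℝ[X]) + 2)) * ((2 * (n : ℝ[X]) + 3) * derivative^[n] ((X ^ 2 - 1) ^ (n + 1))
        + (2 * ((n : ℝ[X]) + 1)) * derivative^[n] ((X ^ 2 - 1) ^ n)) := by
    have : derivative (derivative (((X : ℝ[X]) ^ 2 - 1) ^ (n + 2))) =
        ((2 * (n + 2) * (2 * n + 3) : ℕ) : ℝ[X]) * (X ^ 2 - 1) ^ (n + 1)
        + ((2 * (n + 2) * (2 * (n + 1)) : ℕ) : ℝ[X]) * (X ^ 2 - 1) ^ n := by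
      simp only [derivative_pow_succ, derivative_mul, derivative_sub, derivative_zero,
        derivative_one, derivative_X, C_add, C_1, map_natCast,
        derivative_add, derivative_natCast]
      push_cast
      ring
    rw [Function.iterate_add_apply derivative n 2]
    simp only [Function.iterate_succ_apply, Function.iterate_zero_apply]
    rw [this, iterate_map_add, iterate_derivative_natCast_mul, iterate_derivative_natCast_mul]
    push_cast
    ring
  have k1 := norm_const_succ n
  have k2 := norm_const_succ (n + 1)
  simp only [legendrePoly, legendrePrim, h2]
  push_cast at k1 k2
  set A := derivative^[n] (((X : ℝ[X]) ^ 2 - 1) ^ (n + 1))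
  set B := derivative^[n] (((X : ℝ[X]) ^ 2 - 1) ^ n)
  linear_combination ((2 * (n : ℝ[X]) + 3) * A + 2 * ((n : ℝ[X]) + 1) * B) * k2 + B * k1

/-- The Leibniz rule applied to `D^(n+1)` of `X (X² - 1)^(n+1)`, which is
`D (X² - 1)^(n+2)` up to a constant. -/
lemma legendrePoly_eq_X_mul (n : ℕ) :
    legendrePoly (n + 2) = X * legendrePoly (n + 1) + ((n : ℝ[X]) + 1) * legendrePrim n := by
  have h2 : derivative^[n + 2] (((X : ℝ[X]) ^ 2 - 1) ^ (n + 2)) =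
      (2 * ((n : ℝ[X]) + 2)) * (X * derivative^[n + 1] ((X ^ 2 - 1) ^ (n + 1))
        + ((n : ℝ[X]) + 1) * derivative^[n] ((X ^ 2 - 1) ^ (n + 1))) := by
    have : derivative (((X : ℝ[X]) ^ 2 - 1) ^ (n + 2)) =
        ((2 * (n + 2) : ℕ) : ℝ[X]) * (X * (X ^ 2 - 1) ^ (n + 1)) := by
      simp only [derivative_pow_succ, derivative_sub, derivative_X, derivative_one, C_add,
        C_1, map_natCast]
      push_cast
      ring
    rw [Function.iterate_succ_apply, this, iterate_derivative_natCast_mul,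
      mul_comm X, iterate_derivative_mul_X]
    simp only [nsmul_eq_mul, Nat.add_sub_cancel]
    push_cast
    ring
  have k2 := norm_const_succ (n + 1)
  simp only [legendrePoly, legendrePrim, h2]
  push_cast at k2
  set A := derivative^[n + 1] (((X : ℝ[X]) ^ 2 - 1) ^ (n + 1))
  set B := derivative^[n] (((X : ℝ[X]) ^ 2 - 1) ^ (n + 1))
  linear_combination (X * A + ((n : ℝ[X]) + 1) * B) * k2

/-- Bonnet's recurrence. -/
lemma legendre_rec (n : ℕ) :
    ((n : ℝ[X]) + 2) * legendrePoly (n + 2) + ((n : ℝ[X]) + 1) * legendrePoly n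
      = (2 * (n : ℝ[X]) + 3) * (X * legendrePoly (n + 1)) := by
  linear_combination (2 * (n : ℝ[X]) + 3) * legendrePoly_eq_X_mul n -
    ((n : ℝ[X]) + 1) * legendrePoly_eq_prim n

lemma derivative_legendre_sub (n : ℕ) :
    derivative (legendrePoly (n + 2)) - derivative (legendrePoly n)
      = (2 * (n : ℝ[X]) + 3) * legendrePoly (n + 1) := by
  have h := congrArg derivative (legendrePoly_eq_prim n)
  simp [derivative_mul, derivative_legendrePrim] at h
  linear_combination h

lemma derivative_legendre_succ (n : ℕ) :
    derivative (legendrePoly (n + 2))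
      = X * derivative (legendrePoly (n + 1)) + ((n : ℝ[X]) + 2) * legendrePoly (n + 1) := by
  have h := congrArg derivative (legendrePoly_eq_X_mul n)
  simp [derivative_mul, derivative_legendrePrim] at h
  linear_combination h

lemma legendrePoly_zero : legendrePoly 0 = 1 := by simp [legendrePoly]

lemma legendrePoly_one : legendrePoly 1 = X := by
  have h := norm_const_succ 0
  simp only [legendrePoly, Function.iterate_one, pow_one, derivative_sub, derivative_X_sq,
    derivative_one, C_ofNat]
  simp at h ⊢
  linear_combination X * h

/-- The Legendre differential equation. -/
lemma legendre_ode (n : ℕ) :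
    (1 - X ^ 2) * derivative (derivative (legendrePoly n)) - 2 * X * derivative (legendrePoly n)
      + ((n : ℝ[X]) * ((n : ℝ[X]) + 1)) * legendrePoly n = 0 := by
  match n with
  | 0 => simp [legendrePoly_zero]
  | 1 => simp [legendrePoly_one]; norm_num
  | n + 2 =>
    have h1 := derivative_legendre_succ n
    have h2 : derivative (legendrePoly (n + 1)) =
        X * derivative (legendrePoly (n + 2)) - ((n : ℝ[X]) + 2) * legendrePoly (n + 2) := by
      have h3 := derivative_legendre_succ (n + 1)
      have h4 := derivative_legendre_sub (n + 1)
      push_cast at h3 h4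
      linear_combination h3 - h4
    have h5 : (1 - X ^ 2) * derivative (legendrePoly (n + 2)) =
        ((n : ℝ[X]) + 2) * (legendrePoly (n + 1) - X * legendrePoly (n + 2)) := by
      linear_combination h1 + X * h2
    have h6 := congrArg derivative h5
    simp [derivative_mul] at h6
    push_cast
    linear_combination h6 + ((n : ℝ[X]) + 2) * h2

/-- The `m`-th derivative `P_n^{(m)}` of the Legendre polynomial, that is, the polynomial factor
of the associated Legendre function. -/
noncomputable def legD (m n : ℕ) : ℝ[X] := derivative^[m] (legendrePoly n)

lemma derivative_legD (m n : ℕ) : derivative (legD m n) = legD (m + 1) n := by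
  simp only [legD, Function.iterate_succ_apply']

/-- The `m`-th derivative of the Legendre differential equation. -/
lemma legD_ode (m n : ℕ) :
    (1 - X ^ 2) * legD (m + 2) n - 2 * ((m : ℝ[X]) + 1) * X * legD (m + 1) n
      + ((n : ℝ[X]) - (m : ℝ[X])) * ((n : ℝ[X]) + (m : ℝ[X]) + 1) * legD m n = 0 := by
  induction m with
  | zero =>
    have := legendre_ode n
    simp [legD]
    linear_combination this
  | succ m ih =>
    have h := congrArg derivative ih
    simp [derivative_mul, derivative_legD] at h
    push_cast
    linear_combination h

/-- The three-term recurrence of the associated Legendre functions: the `m`-th derivative of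
Bonnet's recurrence, in which `P_{n+1}^{(m-1)}` is eliminated by `derivative_legendre_sub`. -/
lemma legD_rec (m n : ℕ) :
    ((n : ℝ[X]) + 2 - (m : ℝ[X])) * legD m (n + 2) + ((n : ℝ[X]) + 1 + (m : ℝ[X])) * legD m n
      = (2 * (n : ℝ[X]) + 3) * (X * legD m (n + 1)) := by
  have hsub : ∀ k, legD (k + 1) (n + 2) - legD (k + 1) n =
      (2 * (n : ℝ[X]) + 3) * legD k (n + 1) := by
    intro k
    induction k with
    | zero => exact derivative_legendre_sub n
    | succ k ih =>
      have h := congrArg derivative ih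
      simp [derivative_mul, derivative_legD] at h
      linear_combination h
  induction m with
  | zero => simpa [legD] using legendre_rec n
  | succ m ih =>
    have h := congrArg derivative ih
    simp [derivative_mul, derivative_legD] at h
    push_cast
    linear_combination h - hsub m

/-! ### Orthogonality and norms -/

/-- The linear functional `p ↦ ∫_{-1}^1 p`. -/
noncomputable def intPoly : ℝ[X] →ₗ[ℝ] ℝ where
  toFun p := ∫ x in (-1 : ℝ)..1, p.eval x
  map_add' p q := by
    simp only [eval_add]
    exact intervalIntegral.integral_add (p.continuous.intervalIntegrable _ _)
      (q.continuous.intervalIntegrable _ _)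
  map_smul' c p := by
    simp [eval_smul]

lemma intPoly_apply (p : ℝ[X]) : intPoly p = ∫ x in (-1 : ℝ)..1, p.eval x := rfl

lemma intPoly_C_mul (c : ℝ) (p : ℝ[X]) : intPoly (C c * p) = c * intPoly p := by
  rw [← smul_eq_C_mul, map_smul, smul_eq_mul]

lemma intPoly_derivative (p : ℝ[X]) : intPoly (derivative p) = p.eval 1 - p.eval (-1) := by
  rw [intPoly_apply]
  exact intervalIntegral.integral_eq_sub_of_hasDerivAt (fun x _ => p.hasDerivAt x)
    (p.derivative.continuous.intervalIntegrable _ _)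

lemma intPoly_eq_integral_cos (p : ℝ[X]) :
    intPoly p = ∫ θ in (0 : ℝ)..π, p.eval (cos θ) * sin θ := by
  have h := intervalIntegral.integral_comp_mul_deriv (a := 0) (b := π) (f := cos)
    (f' := fun x => -sin x) (g := fun x => p.eval x) (fun x _ => Real.hasDerivAt_cos x)
    (by fun_prop) p.continuous
  simp only [Function.comp, cos_zero, cos_pi, mul_neg, intervalIntegral.integral_neg] at h
  rw [intPoly_apply, intervalIntegral.integral_symm, ← h, neg_neg]

/-- The product `(1 - X²)^m P_i^{(m)} P_j^{(m)}`. -/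
noncomputable def legW (m i j : ℕ) : ℝ[X] := (1 - X ^ 2) ^ m * (legD m i * legD m j)

lemma legW_comm (m i j : ℕ) : legW m i j = legW m j i := by
  simp only [legW]; ring

/-- Integration by parts with the differential equation in the Sturm–Liouville form
`((1 - X²)^(m+1) P_j^{(m+1)})' = -(j-m)(j+m+1) (1 - X²)^m P_j^{(m)}`. -/
lemma intPoly_legW_succ (m i j : ℕ) :
    intPoly (legW (m + 1) i j) = ((j : ℝ) - m) * ((j : ℝ) + m + 1) * intPoly (legW m i j) := by
  have h : derivative ((1 - X ^ 2) ^ (m + 1) * (legD m i * legD (m + 1) j)) =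
      legW (m + 1) i j - C (((j : ℝ) - m) * ((j : ℝ) + m + 1)) * legW m i j := by
    have ode := legD_ode m j
    simp only [legW, derivative_mul, derivative_pow_succ, derivative_sub, derivative_X,
      derivative_one, derivative_legD, C_add, C_sub, C_mul, C_1, map_natCast, pow_one]
    push_cast
    linear_combination (1 - X ^ 2) ^ m * legD m i * ode
  have h2 := intPoly_derivative ((1 - X ^ 2) ^ (m + 1) * (legD m i * legD (m + 1) j))
  rw [h, map_sub, intPoly_C_mul] at h2
  simp at h2
  linear_combination h2

/-- Orthogonality. For `m = 0` the eigenvalues `i(i+1)` and `j(j+1)` differ; larger `m` reduce to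
`m = 0` by `intPoly_legW_succ`. -/
lemma intPoly_legW_ne (m : ℕ) {i j : ℕ} (hij : i ≠ j) : intPoly (legW m i j) = 0 := by
  induction m with
  | zero =>
    have h1 := intPoly_legW_succ 0 i j
    have h2 := intPoly_legW_succ 0 j i
    rw [legW_comm 1 j i, legW_comm 0 j i, h1] at h2
    have hne : (i : ℝ) - j ≠ 0 := sub_ne_zero.2 (by exact_mod_cast hij)
    have hpos : (i : ℝ) + j + 1 ≠ 0 := by positivity
    have : ((i : ℝ) - j) * ((i : ℝ) + j + 1) * intPoly (legW 0 i j) = 0 := by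
      push_cast at h2
      linear_combination -h2
    simpa [hne, hpos] using this
  | succ m ih => rw [intPoly_legW_succ, ih, mul_zero]

lemma legW_rec (m l n : ℕ) (k : ℕ) :
    ((n : ℝ) + 2 - m) * intPoly (X ^ k * legW m l (n + 2))
      + ((n : ℝ) + 1 + m) * intPoly (X ^ k * legW m l n)
      = (2 * (n : ℝ) + 3) * intPoly (X ^ (k + 1) * legW m l (n + 1)) := by
  rw [← intPoly_C_mul, ← intPoly_C_mul, ← intPoly_C_mul, ← map_add]
  congr 1
  have := legD_rec m n
  simp only [legW, C_add, C_sub, C_mul, C_1, map_natCast, C_ofNat]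
  linear_combination X ^ k * (1 - X ^ 2) ^ m * legD m l * this

/-- `∫ P_n² = 2/(2n+1)`: pairing Bonnet's recurrence once with `P_{n+1}` and once with `P_n`
evaluates `∫ x P_n P_{n+1}` in two ways. -/
lemma intPoly_legW_zero_self (n : ℕ) : (2 * (n : ℝ) + 1) * intPoly (legW 0 n n) = 2 := by
  induction n with
  | zero => simp [legW, legD, legendrePoly_zero, intPoly_apply]; norm_num
  | succ n ih =>
    rcases n with _ | n
    · simp [legW, legD, legendrePoly_one, intPoly_apply, ← pow_two]; norm_num
    · have h1 := legW_rec 0 (n + 2) n 0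
      have h2 := legW_rec 0 (n + 1) (n + 1) 0
      have e : (X : ℝ[X]) ^ 1 * legW 0 (n + 1) (n + 2) = X ^ 1 * legW 0 (n + 2) (n + 1) := by
        rw [legW_comm]
      simp only [pow_zero, one_mul, zero_add, add_assoc, Nat.reduceAdd] at h1 h2
      rw [intPoly_legW_ne 0 (show n + 2 ≠ n by omega)] at h1
      rw [intPoly_legW_ne 0 (show n + 1 ≠ n + 3 by omega), e] at h2
      push_cast at h1 h2 ih ⊢
      have hn : (n : ℝ) + 2 ≠ 0 := by positivity
      apply mul_left_cancel₀ hn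
      linear_combination (2 * (n : ℝ) + 5) * h1 - (2 * (n : ℝ) + 3) * h2 + ((n : ℝ) + 2) * ih

lemma intPoly_legW_self {m l : ℕ} (h : m ≤ l) :
    ((l - m).factorial : ℝ) * intPoly (legW m l l) =
      ((l + m).factorial : ℝ) * intPoly (legW 0 l l) := by
  induction m with
  | zero => simp
  | succ m ih =>
    have ih := ih (by omega)
    obtain ⟨d, rfl⟩ : ∃ d, l = m + 1 + d := ⟨l - (m + 1), by omega⟩
    have e1 : m + 1 + d - m = d + 1 := by omega
    have e2 : m + 1 + d - (m + 1) = d := by omega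
    rw [e1] at ih
    rw [e2, ← add_assoc, Nat.factorial_succ (m + 1 + d + m), intPoly_legW_succ]
    rw [Nat.factorial_succ] at ih
    push_cast at ih ⊢
    linear_combination ((m : ℝ) + 1 + d + m + 1) * ih

/-- The normalising constant `c_l = (2l+1)/2 · (l-m)!/(l+m)!`. The subtraction is truncated, so the
value is meaningful only for `m ≤ l`. -/
noncomputable def legConst (m l : ℕ) : ℝ :=
  ((2 * (l : ℝ) + 1) / 2) * ((Nat.factorial (l - m) : ℝ) / (Nat.factorial (l + m) : ℝ))

lemma legConst_mul_self {m l : ℕ} (h : m ≤ l) : legConst m l * intPoly (legW m l l) = 1 := by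
  have h1 := intPoly_legW_self h
  have h2 := intPoly_legW_zero_self l
  have h3 : ((l + m).factorial : ℝ) ≠ 0 := by positivity
  rw [legConst]
  field_simp
  linear_combination (2 * (l : ℝ) + 1) * h1 + ((l + m).factorial : ℝ) * h2

/-! ### Convergence of moments -/

/-- The number `μ(k, d) = (1/π) ∫_0^π cos^k θ cos(dθ) dθ`. -/
noncomputable def limMoment (k : ℕ) (d : ℤ) : ℝ :=
  (1 / π) * ∫ θ in (0 : ℝ)..π, cos θ ^ k * cos (d * θ)

lemma limMoment_succ (k : ℕ) (d : ℤ) :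
    limMoment (k + 1) d = 1 / 2 * limMoment k (d + 1) + 1 / 2 * limMoment k (d - 1) := by
  have hi : ∀ e : ℤ, IntervalIntegrable (fun θ => cos θ ^ k * cos (e * θ)) MeasureTheory.volume
      0 π :=
    fun e => Continuous.intervalIntegrable (by fun_prop) _ _
  have : ∫ θ in (0 : ℝ)..π, cos θ ^ (k + 1) * cos (d * θ) =
      1 / 2 * ((∫ θ in (0 : ℝ)..π, cos θ ^ k * cos ((d + 1 : ℤ) * θ)) +
        ∫ θ in (0 : ℝ)..π, cos θ ^ k * cos ((d - 1 : ℤ) * θ)) := by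
    rw [← intervalIntegral.integral_add (hi _) (hi _), ← intervalIntegral.integral_const_mul]
    congr 1
    ext θ
    push_cast
    rw [add_mul, sub_mul, cos_add, cos_sub, one_mul]
    ring
  simp only [limMoment, this]
  ring

lemma limMoment_zero (d : ℤ) : limMoment 0 d = if d = 0 then 1 else 0 := by
  split_ifs with h
  · subst h
    simp [limMoment, pi_ne_zero]
  · have hd : (d : ℝ) ≠ 0 := by exact_mod_cast h
    simp [limMoment, intervalIntegral.integral_comp_mul_left (fun x => cos x) hd, sin_int_mul_pi]

lemma tendsto_ratio (p q : ℝ) :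
    Tendsto (fun l : ℕ => ((l : ℝ) + p) / (2 * (l : ℝ) + q)) atTop (nhds (1 / 2)) := by
  have h1 : Tendsto (fun l : ℕ => (1 + p / (l : ℝ)) / (2 + q / (l : ℝ))) atTop
      (nhds ((1 + 0) / (2 + 0))) :=
    (tendsto_const_nhds.add (tendsto_const_div_atTop_nhds_zero_nat p)).div
      (tendsto_const_nhds.add (tendsto_const_div_atTop_nhds_zero_nat q)) (by norm_num)
  norm_num only [add_zero] at h1
  norm_num only
  refine h1.congr' ?_
  filter_upwards [eventually_gt_atTop 0] with l hl
  have : (l : ℝ) ≠ 0 := by positivity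
  rw [← mul_div_mul_left _ _ this]
  congr 1 <;> field_simp

/-- The mixed moment of `q_l` and `q_{l+d}` tends to `μ(k, d)`. Negative `d` are needed because the
recurrence lowers `d`; the truncation in `toNat` is harmless once `l ≥ |d|`. -/
lemma tendsto_moment (m k : ℕ) (d : ℤ) :
    Tendsto (fun l : ℕ => legConst m l * intPoly (X ^ k * legW m l ((l : ℤ) + d).toNat)) atTop
      (nhds (limMoment k d)) := by
  induction k generalizing d with
  | zero =>
    rw [limMoment_zero]
    refine tendsto_const_nhds.congr' ?_
    filter_upwards [eventually_ge_atTop (m + d.natAbs + 1)] with l hl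
    split_ifs with hd
    · subst hd
      simp [legConst_mul_self (show m ≤ l by omega)]
    · rw [pow_zero, one_mul, intPoly_legW_ne m (show l ≠ ((l : ℤ) + d).toNat by omega), mul_zero]
  | succ k ih =>
    rw [limMoment_succ]
    have hα := tendsto_ratio (d + 1 - m) (2 * d + 1)
    have hβ := tendsto_ratio (d + m) (2 * d + 1)
    refine ((hα.mul (ih (d + 1))).add (hβ.mul (ih (d - 1)))).congr' ?_
    filter_upwards [eventually_ge_atTop (m + d.natAbs + 1)] with l hl
    obtain ⟨n, hn⟩ : ∃ n : ℕ, (l : ℤ) + d = n + 1 := ⟨((l : ℤ) + d - 1).toNat, by omega⟩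
    have e1 : ((l : ℤ) + d).toNat = n + 1 := by omega
    have e2 : ((l : ℤ) + (d + 1)).toNat = n + 2 := by omega
    have e3 : ((l : ℤ) + (d - 1)).toNat = n := by omega
    have hr : (d : ℝ) = n + 1 - l := by
      have : (l : ℝ) + d = n + 1 := by exact_mod_cast hn
      linear_combination this
    rw [e1, e2, e3, hr]
    have hrec := legW_rec m l n k
    have hpos : 2 * (n : ℝ) + 3 ≠ 0 := by positivity
    have hden : 2 * (l : ℝ) + (2 * ((n : ℝ) + 1 - l) + 1) = 2 * (n : ℝ) + 3 := by ring
    rw [hden]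
    field_simp
    linear_combination legConst m l * hrec

/-- Equidistribution tested against polynomials in `cos θ`. -/
lemma tendsto_poly (m : ℕ) (p : ℝ[X]) :
    Tendsto (fun l : ℕ => legConst m l * intPoly (p * legW m l l)) atTop
      (nhds ((1 / π) * ∫ θ in (0 : ℝ)..π, p.eval (cos θ))) := by
  induction p using Polynomial.induction_on' with
  | add p q hp hq =>
    have e : ∫ θ in (0 : ℝ)..π, (p + q).eval (cos θ) =
        (∫ θ in (0 : ℝ)..π, p.eval (cos θ)) + ∫ θ in (0 : ℝ)..π, q.eval (cos θ) := by
      simp only [eval_add]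
      exact intervalIntegral.integral_add
        ((p.continuous.comp continuous_cos).intervalIntegrable _ _)
        ((q.continuous.comp continuous_cos).intervalIntegrable _ _)
    rw [e, mul_add]
    refine (hp.add hq).congr fun l => ?_
    rw [add_mul, map_add, mul_add]
  | monomial k c =>
    have h := (tendsto_moment m k 0).const_mul c
    have e : (1 / π) * ∫ θ in (0 : ℝ)..π, (monomial k c).eval (cos θ) = c * limMoment k 0 := by
      simp [limMoment]
      ring
    rw [e]
    refine h.congr fun l => ?_
    simp only [add_zero, Int.toNat_natCast, ← C_mul_X_pow_eq_monomial, mul_assoc, intPoly_C_mul]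
    ring

/-! ### Associated Legendre functions and continuous test functions -/

lemma iteratedDeriv_eval (p : ℝ[X]) (n : ℕ) :
    iteratedDeriv n (fun x => p.eval x) = fun x => (derivative^[n] p).eval x := by
  induction n with
  | zero => simp
  | succ n ih =>
    rw [iteratedDeriv_succ, ih, Function.iterate_succ_apply']
    ext x
    exact Polynomial.deriv _

lemma assocLegendre_cos_sq (l m : ℕ) (θ : ℝ) :
    assocLegendre l m (cos θ) ^ 2 = (legW m l l).eval (cos θ) := by
  have h1 : iteratedDeriv (l + m) (fun y : ℝ => (y ^ 2 - 1) ^ l) (cos θ) =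
      (derivative^[l + m] (((X : ℝ[X]) ^ 2 - 1) ^ l)).eval (cos θ) := by
    rw [← congrFun (iteratedDeriv_eval _ _) (cos θ)]
    simp
  have h2 : ((1 - cos θ ^ 2) ^ ((m : ℝ) / 2)) ^ 2 = (1 - cos θ ^ 2) ^ m := by
    have h0 : 0 ≤ 1 - cos θ ^ 2 := by nlinarith [sin_sq_add_cos_sq θ, sq_nonneg (sin θ)]
    rw [← rpow_mul_natCast h0, Nat.cast_ofNat, div_mul_cancel₀ _ (two_ne_zero' ℝ), rpow_natCast]
  have h3 : ((-1 : ℝ) ^ m) ^ 2 = 1 := by rw [← pow_mul, mul_comm, pow_mul]; simp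
  have h4 : legD m l = C (1 / (2 ^ l * (l.factorial : ℝ))) * derivative^[l + m] ((X ^ 2 - 1) ^ l) := by
    rw [legD, legendrePoly, iterate_derivative_C_mul, ← Function.iterate_add_apply, add_comm]
  rw [assocLegendre, h1, mul_pow, mul_pow, h2, div_pow, h3]
  simp only [legW, h4, eval_mul, eval_C, eval_pow, eval_sub, eval_one, eval_X]
  ring

lemma legW_self_nonneg (m l : ℕ) (θ : ℝ) : 0 ≤ (legW m l l).eval (cos θ) := by
  rw [← assocLegendre_cos_sq]; positivity

/-- **Full-sequence equidistribution of Legendre polynomials (Proposition in §6.2).**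
For fixed `m ≥ 0` and every continuous `a : [0, π] → ℝ`,
`((2l+1)/2) ((l−m)!/(l+m)!) ∫_0^π a(θ) sin θ P_{l,m}(cos θ)² dθ → (1/π) ∫_0^π a(θ) dθ`
as `l → ∞` (over integers `l ≥ m`). -/
theorem legendre_full_sequence_equidistribution
    (m : ℕ) (a : ℝ → ℝ) (ha : ContinuousOn a (Set.Icc 0 π)) :
    Tendsto (fun l : ℕ =>
        ((2 * (l : ℝ) + 1) / 2) *
          ((Nat.factorial (l - m) : ℝ) / (Nat.factorial (l + m) : ℝ)) *
          ∫ θ in (0:ℝ)..π, a θ * Real.sin θ * (assocLegendre l m (Real.cos θ)) ^ 2)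
      atTop
      (nhds ((1 / π) * ∫ θ in (0:ℝ)..π, a θ)) := by
  simp only [assocLegendre_cos_sq]
  change Tendsto (fun l : ℕ => legConst m l *
    ∫ θ in (0:ℝ)..π, a θ * sin θ * (legW m l l).eval (cos θ)) _ _
  rw [Metric.tendsto_nhds]
  intro ε hε
  have hg : ContinuousOn (fun x => a (arccos x)) (Set.Icc (-1) 1) :=
    ha.comp continuous_arccos.continuousOn fun x _ => ⟨arccos_nonneg x, arccos_le_pi x⟩
  obtain ⟨p, hp⟩ := exists_polynomial_near_of_continuousOn (-1) 1 _ hg (ε / 3) (by positivity)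
  have hpa : ∀ θ ∈ Set.Icc 0 π, |a θ - p.eval (cos θ)| ≤ ε / 3 := by
    intro θ hθ
    have := hp (cos θ) ⟨neg_one_le_cos θ, cos_le_one θ⟩
    rw [arccos_cos hθ.1 hθ.2, abs_sub_comm] at this
    exact this.le
  have hai : IntervalIntegrable a MeasureTheory.volume 0 π :=
    ContinuousOn.intervalIntegrable (by rwa [Set.uIcc_of_le pi_pos.le])
  have hpi : IntervalIntegrable (fun θ => p.eval (cos θ)) MeasureTheory.volume 0 π :=
    (p.continuous.comp continuous_cos).intervalIntegrable _ _
  have hlim : |(1 / π) * (∫ θ in (0:ℝ)..π, a θ) - (1 / π) * ∫ θ in (0:ℝ)..π, p.eval (cos θ)|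
      ≤ ε / 3 := by
    rw [← mul_sub, ← intervalIntegral.integral_sub hai hpi, abs_mul, abs_of_pos (by positivity)]
    have := intervalIntegral.norm_integral_le_of_norm_le_const (a := 0) (b := π) (C := ε / 3)
      (f := fun θ => a θ - p.eval (cos θ)) (fun θ hθ => by
        rw [Set.uIoc_of_le pi_pos.le] at hθ
        exact hpa θ ⟨hθ.1.le, hθ.2⟩)
    rw [sub_zero, abs_of_pos pi_pos, norm_eq_abs] at this
    rw [one_div, inv_mul_le_iff₀ pi_pos]
    linarith
  filter_upwards [Metric.tendsto_nhds.1 (tendsto_poly m p) (ε / 3) (by positivity),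
    eventually_ge_atTop m] with l hl hml
  rw [dist_eq] at hl ⊢
  have hdiff : |legConst m l * (∫ θ in (0:ℝ)..π, a θ * sin θ * (legW m l l).eval (cos θ)) -
      legConst m l * intPoly (p * legW m l l)| ≤ ε / 3 := by
    have hw : Continuous fun θ => sin θ * (legW m l l).eval (cos θ) :=
      continuous_sin.mul ((legW m l l).continuous.comp continuous_cos)
    have hc : 0 ≤ legConst m l := by rw [legConst]; positivity
    have h1 : intPoly (p * legW m l l) =
        ∫ θ in (0:ℝ)..π, p.eval (cos θ) * (sin θ * (legW m l l).eval (cos θ)) := by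
      rw [intPoly_eq_integral_cos]
      congr 1; ext θ; rw [eval_mul]; ring
    simp only [mul_assoc (a _)]
    rw [← mul_sub, h1, ← intervalIntegral.integral_sub (hai.mul_continuousOn hw.continuousOn)
      (hpi.mul_continuousOn hw.continuousOn), abs_mul, abs_of_nonneg hc]
    have h2 : |∫ θ in (0:ℝ)..π, (a θ * (sin θ * (legW m l l).eval (cos θ)) -
        p.eval (cos θ) * (sin θ * (legW m l l).eval (cos θ)))| ≤
        ∫ θ in (0:ℝ)..π, ε / 3 * (sin θ * (legW m l l).eval (cos θ)) := by
      rw [← norm_eq_abs]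
      refine intervalIntegral.norm_integral_le_of_norm_le pi_pos.le (.of_forall fun θ hθ => ?_)
        ((hw.const_mul _).intervalIntegrable _ _)
      have hθ' : θ ∈ Set.Icc 0 π := ⟨hθ.1.le, hθ.2⟩
      have h0 : 0 ≤ sin θ * (legW m l l).eval (cos θ) :=
        mul_nonneg (sin_nonneg_of_mem_Icc hθ') (legW_self_nonneg m l θ)
      rw [← sub_mul, norm_eq_abs, abs_mul, abs_of_nonneg h0]
      exact mul_le_mul_of_nonneg_right (hpa θ hθ') h0
    have h3 : ∫ θ in (0:ℝ)..π, sin θ * (legW m l l).eval (cos θ) = intPoly (legW m l l) := by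
      rw [intPoly_eq_integral_cos]
      congr 1; ext θ; ring
    rw [intervalIntegral.integral_const_mul, h3] at h2
    refine (mul_le_mul_of_nonneg_left h2 hc).trans_eq ?_
    linear_combination ε / 3 * legConst_mul_self hml
  rw [abs_le] at hdiff hlim
  rw [abs_lt] at hl ⊢
  constructor <;> linarith [hdiff.1, hdiff.2, hlim.1, hlim.2, hl.1, hl.2]
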